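/- Let f(z) = Σ_{n≥0} a_n z^n be analytic on the unit disk with |f(z)| ≤ 1 and S_r = π Σ_{n≥1} n|a_n|^2 r^{2n}. Then for r ≤ 1/3: Σ_{n≥0} |a_n| r^n + (1/(1+|a_0|) + r/(1−r))·Σ_{n≥1}|a_n|^2 r^{2n} + (8/9)·S_r/(π − S_r) ≤ 1. -/

import Mathlib

/-!
Write `α = ‖a 0‖`. The inequality follows from two sharp coefficient estimates for a power series
bounded by `1` on the unit disk, both due to Carlson:

* `‖a (2n+1)‖ + ∑_{k ≤ n} ‖a k‖² ≤ 1` (`bohr_odd`),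
* `‖a (2n+2)‖ + ∑_{k ≤ n} ‖a k‖² + ‖a (n+1)‖² / (1 + α) ≤ 1` (`bohr_even`).

They come from the fact that multiplication by `f` contracts the Hardy space `H²`, so the truncated
lower triangular Toeplitz matrices of the coefficients are contractions (`bohr_toeplitz`, obtained
from Parseval's identity on circles of radius `ρ < 1` and `ρ → 1`); each estimate is this
contraction applied to one explicit vector.

Summing the estimates against `r ^ n` and summing by parts gives, with `Q = ∑_{n ≥ 1} ‖a n‖² r²ⁿ`,
`∑ ‖a n‖ rⁿ + (1 / (1 + α) + r / (1 - r)) Q ≤ α + (1 - α²) r / (1 - r)` (`bohr_first_part`).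
For `r ≤ 1/3` the right side is at most `1 - (1 - α)² / 2`.

The same estimates give `‖a n‖ ≤ 1 - α²` for `n ≥ 1`, so `s = S / π` satisfies
`s ≤ (1 - α²)² ∑ n / 9ⁿ = 9 (1 - α²)² / 64` (`bohr_area`). This is weaker than the sharp area
bound but has the same leading order as `α → 1`, and it suffices for
`(8/9) s / (1 - s) ≤ (1 - α)² / 2`, which after clearing denominators is
`9 (1 - α) (1 + α)² ≤ 16 (3 + α)`.
-/

/-! ### Parseval's identity and the Toeplitz contraction -/

/-- Parseval's identity for a series in an orthonormal family which need not be complete. -/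
theorem bohr_hasSum_norm_sq {E : Type*} [NormedAddCommGroup E] [InnerProductSpace ℂ E]
    {v : ℕ → E} (hv : Orthonormal ℂ v) {c : ℕ → ℂ} {x : E} (h : HasSum (fun n => c n • v n) x) :
    HasSum (fun n => ‖c n‖ ^ 2) (‖x‖ ^ 2) := by
  -- The coefficients of the series are the inner products of its sum with the family.
  have hc : ∀ n, inner ℂ (v n) x = c n := by
    intro n
    have h1 := h.mapL (innerSL ℂ (v n))
    have h2 : HasSum (fun m => innerSL ℂ (v n) (c m • v m)) (c n) := by
      convert hasSum_ite_eq n (c n) using 2 with m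
      simp only [map_smul, innerSL_apply_apply, orthonormal_iff_ite.mp hv, smul_eq_mul]
      by_cases hnm : n = m
      · simp [hnm]
      · simp [hnm, Ne.symm hnm]
    exact h1.unique h2
  have h3 := h.mapL (innerSL ℂ x)
  have h4 := Complex.hasSum_re h3
  convert h4 using 2 with n
  · have : inner ℂ x (v n) = (starRingEnd ℂ) (c n) := by rw [← hc n, inner_conj_symm]
    simp only [map_smul, innerSL_apply_apply, this, smul_eq_mul, Complex.mul_conj, Complex.ofReal_re,
      Complex.normSq_eq_norm_sq]
  · simp only [innerSL_apply_apply]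
    exact (inner_self_eq_norm_sq (𝕜 := ℂ) x).symm

open MeasureTheory AddCircle in
/-- If one absolutely convergent power series dominates another pointwise on the unit circle, then it
also does so for the square sums of coefficients. Both sums are `L²` norms on the circle, here
realised as `AddCircle 1`. -/
theorem bohr_circle_compare {c d : ℕ → ℂ} (hc : Summable fun n => ‖c n‖)
    (hd : Summable fun n => ‖d n‖)
    (h : ∀ z : ℂ, ‖z‖ = 1 → ‖∑' n, c n * z ^ n‖ ≤ ‖∑' n, d n * z ^ n‖) (s : Finset ℕ) :
    ∑ n ∈ s, ‖c n‖ ^ 2 ≤ ∑' n, ‖d n‖ ^ 2 := by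
  let L := ContinuousMap.toLp (E := ℂ) 2 (haarAddCircle (T := (1 : ℝ))) ℂ
  have key : ∀ e : ℕ → ℂ, (Summable fun n => ‖e n‖) → ∃ F : C(AddCircle (1 : ℝ), ℂ),
      (∀ t, F t = ∑' n, e n * (toCircle t : ℂ) ^ n) ∧
      HasSum (fun n => ‖e n‖ ^ 2) (‖L F‖ ^ 2) := by
    intro e he
    have hs : Summable fun n : ℕ => e n • (fourier (T := (1 : ℝ)) (n : ℤ)) := by
      refine Summable.of_norm ?_
      simpa only [norm_smul, fourier_norm, mul_one] using he
    refine ⟨∑' n : ℕ, e n • (fourier (T := (1 : ℝ)) (n : ℤ)), fun t => ?_, ?_⟩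
    · have := (ContinuousMap.evalCLM ℂ t).hasSum hs.hasSum
      refine this.tsum_eq.symm.trans (tsum_congr fun n => ?_)
      simp [fourier_apply, AddCircle.toCircle_nsmul]
    · have h1 := hs.hasSum.mapL L
      have hv : Orthonormal ℂ (fun n : ℕ => fourierLp (T := (1 : ℝ)) 2 (n : ℤ)) :=
        orthonormal_fourier.comp _ Nat.cast_injective
      refine bohr_hasSum_norm_sq hv ?_
      convert h1 using 2 with n
      simp [L, fourierLp]
  obtain ⟨F, hF, hF2⟩ := key c hc
  obtain ⟨G, hG, hG2⟩ := key d hd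
  rw [hG2.tsum_eq]
  refine (sum_le_hasSum s (fun _ _ => by positivity) hF2).trans ?_
  refine pow_le_pow_left₀ (norm_nonneg _) (Lp.norm_le_norm_of_ae_le ?_) 2
  filter_upwards [ContinuousMap.coeFn_toLp (p := 2) (𝕜 := ℂ) haarAddCircle F,
    ContinuousMap.coeFn_toLp (p := 2) (𝕜 := ℂ) haarAddCircle G] with t h1 h2
  rw [h1, h2, hF, hG]
  exact h _ (Circle.norm_coe _)

open Filter Topology in
/-- The lower triangular Toeplitz matrix `(a (m - j))` of size `N` is a contraction for the Euclidean
norm: the left side sums the first `N` squared coefficients of `p * f`, for a polynomial `p` of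
degree less than `N`. -/
theorem bohr_toeplitz {f : ℂ → ℂ} {a : ℕ → ℂ}
    (hf : ∀ z : ℂ, ‖z‖ < 1 → HasSum (fun n => a n * z ^ n) (f z))
    (hbd : ∀ z : ℂ, ‖z‖ < 1 → ‖f z‖ ≤ 1) (N : ℕ) (p : ℕ → ℂ) (hp : ∀ j, N ≤ j → p j = 0) :
    ∑ m ∈ Finset.range N, ‖∑ j ∈ Finset.range (m + 1), p j * a (m - j)‖ ^ 2
      ≤ ∑ j ∈ Finset.range N, ‖p j‖ ^ 2 := by
  -- On the circle of radius `ρ`, `‖p * f‖ ≤ ‖p‖`, so the square sums compare; the weights `ρ ^ (2j)`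
  -- on the right are then dropped, those on the left removed by letting `ρ → 1`.
  have step : ∀ ρ : ℝ, ρ ∈ Set.Ioo (0 : ℝ) 1 →
      ∑ m ∈ Finset.range N, ‖∑ j ∈ Finset.range (m + 1), p j * a (m - j)‖ ^ 2 * ρ ^ (2 * m)
        ≤ ∑ j ∈ Finset.range N, ‖p j‖ ^ 2 := by
    intro ρ hρ
    have hρn : ‖(ρ : ℂ)‖ = ρ := by simp [abs_of_pos hρ.1]
    have ha : Summable fun n => ‖a n * (ρ : ℂ) ^ n‖ :=
      (hf ρ (by rw [hρn]; exact hρ.2)).summable.norm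
    have hp' : Summable fun n => ‖p n * (ρ : ℂ) ^ n‖ := by
      refine summable_of_ne_finset_zero (s := Finset.range N) fun j hj => ?_
      simp [hp j (by simpa using hj)]
    have e1 : ∀ m, ∑ j ∈ Finset.range (m + 1), p j * (ρ : ℂ) ^ j * (a (m - j) * (ρ : ℂ) ^ (m - j))
        = (∑ j ∈ Finset.range (m + 1), p j * a (m - j)) * (ρ : ℂ) ^ m := by
      intro m
      rw [Finset.sum_mul]
      refine Finset.sum_congr rfl fun j hj => ?_
      rw [← Nat.add_sub_cancel' (Nat.le_of_lt_succ (Finset.mem_range.mp hj)), pow_add,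
        Nat.add_sub_cancel_left]
      ring
    have hg : Summable fun m =>
        ‖(∑ j ∈ Finset.range (m + 1), p j * a (m - j)) * (ρ : ℂ) ^ m‖ := by
      simpa only [e1] using summable_norm_sum_mul_range_of_summable_norm hp' ha
    have hz : ∀ z : ℂ, ‖z‖ = 1 →
        ‖∑' m, (∑ j ∈ Finset.range (m + 1), p j * a (m - j)) * (ρ : ℂ) ^ m * z ^ m‖
          ≤ ‖∑' m, p m * (ρ : ℂ) ^ m * z ^ m‖ := by
      intro z hz
      have hρz : ‖(ρ : ℂ) * z‖ < 1 := by rw [norm_mul, hρn, hz, mul_one]; exact hρ.2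
      have az : Summable fun n => ‖a n * ((ρ : ℂ) * z) ^ n‖ := (hf _ hρz).summable.norm
      have pz : Summable fun n => ‖p n * ((ρ : ℂ) * z) ^ n‖ := by
        refine summable_of_ne_finset_zero (s := Finset.range N) fun j hj => ?_
        simp [hp j (by simpa using hj)]
      have := tsum_mul_tsum_eq_tsum_sum_range_of_summable_norm pz az
      have e2 : ∀ m, (∑ j ∈ Finset.range (m + 1), p j * a (m - j)) * (ρ : ℂ) ^ m * z ^ m =
          ∑ j ∈ Finset.range (m + 1), p j * ((ρ : ℂ) * z) ^ j *
            (a (m - j) * ((ρ : ℂ) * z) ^ (m - j)) := by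
        intro m
        rw [mul_assoc, ← mul_pow, Finset.sum_mul]
        refine Finset.sum_congr rfl fun j hj => ?_
        rw [← Nat.add_sub_cancel' (Nat.le_of_lt_succ (Finset.mem_range.mp hj)), pow_add,
          Nat.add_sub_cancel_left]
        ring
      simp only [e2]
      rw [← this, (hf _ hρz).tsum_eq, norm_mul]
      simp only [mul_assoc, ← mul_pow]
      exact mul_le_of_le_one_right (norm_nonneg _) (hbd _ hρz)
    have hsq := bohr_circle_compare hg hp' hz (Finset.range N)
    have hterm : ∀ (w : ℂ) (m : ℕ), ‖w * (ρ : ℂ) ^ m‖ ^ 2 = ‖w‖ ^ 2 * ρ ^ (2 * m) := by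
      intro w m
      rw [norm_mul, norm_pow, hρn]; ring
    simp only [← hterm]
    calc _ ≤ _ := hsq
      _ = ∑ j ∈ Finset.range N, ‖p j * (ρ : ℂ) ^ j‖ ^ 2 :=
          tsum_eq_sum fun j hj => by simp [hp j (by simpa using hj)]
      _ ≤ _ := by
          refine Finset.sum_le_sum fun j _ => ?_
          rw [hterm]
          exact mul_le_of_le_one_right (by positivity) (pow_le_one₀ hρ.1.le hρ.2.le)
  have hcont : Tendsto (fun ρ : ℝ =>
      ∑ m ∈ Finset.range N, ‖∑ j ∈ Finset.range (m + 1), p j * a (m - j)‖ ^ 2 * ρ ^ (2 * m))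
      (𝓝[<] 1) (𝓝 (∑ m ∈ Finset.range N,
        ‖∑ j ∈ Finset.range (m + 1), p j * a (m - j)‖ ^ 2 * (1 : ℝ) ^ (2 * m))) :=
    ((by fun_prop : Continuous fun ρ : ℝ => ∑ m ∈ Finset.range N,
      ‖∑ j ∈ Finset.range (m + 1), p j * a (m - j)‖ ^ 2 * ρ ^ (2 * m)).tendsto 1).mono_left
      nhdsWithin_le_nhds
  simp only [one_pow, mul_one] at hcont
  exact le_of_tendsto hcont
    (eventually_of_mem (Ioo_mem_nhdsLT zero_lt_one) step)

/-! ### Carlson's coefficient inequalities -/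

theorem bohr_phase (β : ℂ) : ∃ y : ℂ, ‖y‖ = 1 ∧ β = y * (‖β‖ : ℂ) := by
  by_cases h : β = 0
  · exact ⟨1, by simp, by simp [h]⟩
  · have h' : (‖β‖ : ℂ) ≠ 0 := by simpa using h
    refine ⟨β / ‖β‖, ?_, by field_simp⟩
    rw [norm_div, Complex.norm_real, norm_norm, div_self (by simpa using h)]

theorem bohr_sum_reflect (a : ℕ → ℂ) (M : ℕ) :
    ∑ i ∈ Finset.range M, ‖a (M - 1 - i)‖ ^ 2 = ∑ k ∈ Finset.range M, ‖a k‖ ^ 2 :=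
  Finset.sum_range_reflect (fun k => ‖a k‖ ^ 2) M

/-- Carlson's inequality for coefficients of odd index. -/
theorem bohr_odd {f : ℂ → ℂ} {a : ℕ → ℂ}
    (hf : ∀ z : ℂ, ‖z‖ < 1 → HasSum (fun n => a n * z ^ n) (f z))
    (hbd : ∀ z : ℂ, ‖z‖ < 1 → ‖f z‖ ≤ 1) (n : ℕ) :
    ‖a (2 * n + 1)‖ + ∑ k ∈ Finset.range (n + 1), ‖a k‖ ^ 2 ≤ 1 := by
  obtain ⟨y, hy, hβ⟩ := bohr_phase (a (2 * n + 1))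
  set σ := ∑ k ∈ Finset.range (n + 1), ‖a k‖ ^ 2 with hσ
  have hσ0 : 0 ≤ σ := Finset.sum_nonneg fun _ _ => by positivity
  -- Rows `0, …, n` of the image see only the entry `1` at index `0` and return `a 0, …, a n`. In row
  -- `2n+1` the entries from `n+1` on line up with `a n, …, a 0` and add `σ` in phase with
  -- `a (2n+1)`.
  let p : ℕ → ℂ := fun j => if j = 0 then 1 else if j < n + 1 then 0 else
    if j < 2 * n + 2 then y * (starRingEnd ℂ) (a (2 * n + 1 - j)) else 0
  have p0 : p 0 = 1 := rfl
  have p1 : ∀ j, j < n → p (j + 1) = 0 := fun j hj => by simp [p, hj]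
  have p2 : ∀ i, i < n + 1 → p (n + 1 + i) = y * (starRingEnd ℂ) (a (n + 1 - 1 - i)) := by
    intro i hi
    have h1 : ¬ (n + 1 + i = 0) := by omega
    have h2 : ¬ (n + 1 + i < n + 1) := by omega
    have h3 : n + 1 + i < 2 * n + 2 := by omega
    have h4 : 2 * n + 1 - (n + 1 + i) = n + 1 - 1 - i := by omega
    simp only [p, h1, h2, h3, h4, if_true, if_false]
  have p3 : ∀ j, 2 * n + 2 ≤ j → p j = 0 := by
    intro j hj
    have h1 : ¬ (j = 0) := by omega
    have h2 : ¬ (j < n + 1) := by omega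
    have h3 : ¬ (j < 2 * n + 2) := by omega
    simp only [p, h1, h2, h3, if_false]
  have hT := bohr_toeplitz hf hbd (2 * n + 2) p p3
  have hR : ∑ j ∈ Finset.range (2 * n + 2), ‖p j‖ ^ 2 = 1 + σ := by
    rw [show 2 * n + 2 = (n + 1) + (n + 1) by ring, Finset.sum_range_add, Finset.sum_range_succ',
      Finset.sum_eq_zero fun j hj => by rw [p1 j (Finset.mem_range.mp hj)]; simp, p0, hσ,
      ← bohr_sum_reflect a (n + 1)]
    congr 1
    · simp
    · refine Finset.sum_congr rfl fun i hi => ?_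
      rw [p2 i (Finset.mem_range.mp hi), norm_mul, hy, one_mul, RCLike.norm_conj]
  have hg1 : ∀ m, m < n + 1 → ∑ j ∈ Finset.range (m + 1), p j * a (m - j) = a m := by
    intro m hm
    rw [Finset.sum_range_succ', Finset.sum_eq_zero fun j hj => by
      rw [p1 j (by have := Finset.mem_range.mp hj; omega), zero_mul], p0]
    simp
  have hg2 : ∑ j ∈ Finset.range (2 * n + 1 + 1), p j * a (2 * n + 1 - j)
      = y * ((‖a (2 * n + 1)‖ + σ : ℝ) : ℂ) := by
    rw [show 2 * n + 1 + 1 = (n + 1) + (n + 1) by ring, Finset.sum_range_add,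
      Finset.sum_range_succ', Finset.sum_eq_zero fun j hj => by
        rw [p1 j (Finset.mem_range.mp hj), zero_mul], p0, hσ, ← bohr_sum_reflect a (n + 1)]
    push_cast
    rw [mul_add, ← hβ, Finset.mul_sum]
    congr 1
    · simp
    · refine Finset.sum_congr rfl fun i hi => ?_
      have hi := Finset.mem_range.mp hi
      rw [p2 i hi, show 2 * n + 1 - (n + 1 + i) = n + 1 - 1 - i by omega, mul_assoc,
        Complex.conj_mul', Nat.add_sub_cancel]
  rw [hR, Finset.sum_range_succ, hg2, norm_mul, hy, one_mul, Complex.norm_real,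
    Real.norm_of_nonneg (by positivity)] at hT
  have hL : σ ≤ ∑ m ∈ Finset.range (2 * n + 1),
      ‖∑ j ∈ Finset.range (m + 1), p j * a (m - j)‖ ^ 2 := by
    rw [hσ, Finset.sum_congr rfl fun m hm => by rw [← hg1 m (Finset.mem_range.mp hm)]]
    exact Finset.sum_le_sum_of_subset_of_nonneg
      (Finset.range_mono (by omega)) fun _ _ _ => by positivity
  have : (‖a (2 * n + 1)‖ + σ) ^ 2 ≤ 1 := by linarith
  exact (sq_le_one_iff₀ (by positivity)).mp this

/-- Carlson's inequality for coefficients of even index. -/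
theorem bohr_even {f : ℂ → ℂ} {a : ℕ → ℂ}
    (hf : ∀ z : ℂ, ‖z‖ < 1 → HasSum (fun n => a n * z ^ n) (f z))
    (hbd : ∀ z : ℂ, ‖z‖ < 1 → ‖f z‖ ≤ 1) (n : ℕ) :
    ‖a (2 * n + 2)‖ + ∑ k ∈ Finset.range (n + 1), ‖a k‖ ^ 2 + ‖a (n + 1)‖ ^ 2 / (1 + ‖a 0‖)
      ≤ 1 := by
  obtain ⟨y, hy, hβ⟩ := bohr_phase (a (2 * n + 2))
  set σ := ∑ k ∈ Finset.range (n + 1), ‖a k‖ ^ 2 with hσ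
  have hσ0 : 0 ≤ σ := Finset.sum_nonneg fun _ _ => by positivity
  -- This `t` solves `1 - ‖a 0‖ * t = t`, which makes the middle row of the image at least as large as
  -- the middle entry `w` of the vector, so that the two cancel.
  obtain ⟨t, ht⟩ : ∃ t : ℝ, t = 1 / (1 + ‖a 0‖) := ⟨_, rfl⟩
  have ht0 : 0 ≤ t := by rw [ht]; positivity
  let w : ℂ := (t : ℂ) * (y * (starRingEnd ℂ) (a (n + 1)))
  have hw : ‖w‖ = t * ‖a (n + 1)‖ := by
    simp only [w, norm_mul, hy, RCLike.norm_conj, Complex.norm_real, Real.norm_of_nonneg ht0,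
      one_mul]
  -- As in the odd case, with an extra entry `w` at the middle index: row `n+1` returns
  -- `a (n+1) + w * a 0`, and row `2n+2` gains `w * a (n+1)`, also in phase.
  let p : ℕ → ℂ := fun j => if j = 0 then 1 else if j < n + 1 then 0 else if j = n + 1 then w else
    if j < 2 * n + 3 then y * (starRingEnd ℂ) (a (2 * n + 2 - j)) else 0
  have p0 : p 0 = 1 := rfl
  have p1 : ∀ j, j < n → p (j + 1) = 0 := fun j hj => by simp [p, hj]
  have pw : p (n + 1) = w := by simp [p]
  have p2 : ∀ i, i < n + 1 → p (n + 2 + i) = y * (starRingEnd ℂ) (a (n + 1 - 1 - i)) := by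
    intro i hi
    have h1 : ¬ (n + 2 + i = 0) := by omega
    have h2 : ¬ (n + 2 + i < n + 1) := by omega
    have h2' : ¬ (n + 2 + i = n + 1) := by omega
    have h3 : n + 2 + i < 2 * n + 3 := by omega
    have h4 : 2 * n + 2 - (n + 2 + i) = n + 1 - 1 - i := by omega
    simp only [p, h1, h2, h2', h3, h4, if_true, if_false]
  have p3 : ∀ j, 2 * n + 3 ≤ j → p j = 0 := by
    intro j hj
    have h1 : ¬ (j = 0) := by omega
    have h2 : ¬ (j < n + 1) := by omega
    have h2' : ¬ (j = n + 1) := by omega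
    have h3 : ¬ (j < 2 * n + 3) := by omega
    simp only [p, h1, h2, h2', h3, if_false]
  have hT := bohr_toeplitz hf hbd (2 * n + 3) p p3
  have hR : ∑ j ∈ Finset.range (2 * n + 3), ‖p j‖ ^ 2 = 1 + ‖w‖ ^ 2 + σ := by
    rw [show 2 * n + 3 = (n + 2) + (n + 1) by ring, Finset.sum_range_add, Finset.sum_range_succ,
      Finset.sum_range_succ', pw,
      Finset.sum_eq_zero fun j hj => by rw [p1 j (Finset.mem_range.mp hj)]; simp, p0, hσ,
      ← bohr_sum_reflect a (n + 1)]
    congr 1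
    · simp
    · refine Finset.sum_congr rfl fun i hi => ?_
      rw [p2 i (Finset.mem_range.mp hi), norm_mul, hy, one_mul, RCLike.norm_conj]
  have hg1 : ∀ m, m < n + 1 → ∑ j ∈ Finset.range (m + 1), p j * a (m - j) = a m := by
    intro m hm
    rw [Finset.sum_range_succ', Finset.sum_eq_zero fun j hj => by
      rw [p1 j (by have := Finset.mem_range.mp hj; omega), zero_mul], p0]
    simp
  have hgm : ∑ j ∈ Finset.range (n + 1 + 1), p j * a (n + 1 - j) = a (n + 1) + w * a 0 := by
    rw [Finset.sum_range_succ, Finset.sum_range_succ', Finset.sum_eq_zero fun j hj => by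
      rw [p1 j (Finset.mem_range.mp hj), zero_mul], p0, pw]
    simp
  have hg2 : ∑ j ∈ Finset.range (2 * n + 2 + 1), p j * a (2 * n + 2 - j)
      = y * ((‖a (2 * n + 2)‖ + t * ‖a (n + 1)‖ ^ 2 + σ : ℝ) : ℂ) := by
    rw [show 2 * n + 2 + 1 = (n + 2) + (n + 1) by ring, Finset.sum_range_add,
      Finset.sum_range_succ, Finset.sum_range_succ', Finset.sum_eq_zero fun j hj => by
        rw [p1 j (Finset.mem_range.mp hj), zero_mul], p0, pw, hσ, ← bohr_sum_reflect a (n + 1),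
      show 2 * n + 2 - (n + 1) = n + 1 by omega]
    push_cast
    rw [mul_add, mul_add, ← hβ, Finset.mul_sum, ← Complex.conj_mul']
    congr 1
    · simp only [w]; ring
    · refine Finset.sum_congr rfl fun i hi => ?_
      have hi := Finset.mem_range.mp hi
      rw [p2 i hi, show 2 * n + 2 - (n + 2 + i) = n + 1 - 1 - i by omega, mul_assoc,
        Complex.conj_mul', Nat.add_sub_cancel]
  rw [hR, Finset.sum_range_succ, hg2, norm_mul, hy, one_mul, Complex.norm_real,
    Real.norm_of_nonneg (by positivity)] at hT
  have hL : σ + ‖a (n + 1) + w * a 0‖ ^ 2 ≤ ∑ m ∈ Finset.range (2 * n + 2),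
      ‖∑ j ∈ Finset.range (m + 1), p j * a (m - j)‖ ^ 2 := by
    rw [hσ, Finset.sum_congr rfl fun m hm => by rw [← hg1 m (Finset.mem_range.mp hm)], ← hgm,
      ← Finset.sum_range_succ
        (fun m => ‖∑ j ∈ Finset.range (m + 1), p j * a (m - j)‖ ^ 2) (n + 1)]
    exact Finset.sum_le_sum_of_subset_of_nonneg
      (Finset.range_mono (by omega)) fun _ _ _ => by positivity
  have hta : 1 - ‖a 0‖ * t = t := by rw [ht]; field_simp; ring
  have hmid : ‖w‖ ≤ ‖a (n + 1) + w * a 0‖ := by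
    have h1 := norm_sub_le_norm_add (a (n + 1)) (w * a 0)
    rw [norm_mul, hw] at h1
    rw [hw]
    calc t * ‖a (n + 1)‖ = (1 - ‖a 0‖ * t) * ‖a (n + 1)‖ := by rw [hta]
      _ = ‖a (n + 1)‖ - t * ‖a (n + 1)‖ * ‖a 0‖ := by ring
      _ ≤ _ := h1
  have hmid2 : ‖w‖ ^ 2 ≤ ‖a (n + 1) + w * a 0‖ ^ 2 := by gcongr
  have h1 : (‖a (2 * n + 2)‖ + t * ‖a (n + 1)‖ ^ 2 + σ) ^ 2 ≤ 1 := by linarith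
  have h2 := (sq_le_one_iff₀ (by positivity)).mp h1
  have h3 : ‖a (n + 1)‖ ^ 2 / (1 + ‖a 0‖) = t * ‖a (n + 1)‖ ^ 2 := by rw [ht]; ring
  linarith

/-! ### The two halves of the Bohr sum -/

theorem bohr_coeff_le {f : ℂ → ℂ} {a : ℕ → ℂ}
    (hf : ∀ z : ℂ, ‖z‖ < 1 → HasSum (fun n => a n * z ^ n) (f z))
    (hbd : ∀ z : ℂ, ‖z‖ < 1 → ‖f z‖ ≤ 1) (n : ℕ) : ‖a (n + 1)‖ ≤ 1 - ‖a 0‖ ^ 2 := by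
  have hP : ∀ k, ‖a 0‖ ^ 2 ≤ ∑ j ∈ Finset.range (k + 1), ‖a j‖ ^ 2 := fun k =>
    Finset.single_le_sum (f := fun j => ‖a j‖ ^ 2) (fun _ _ => by positivity)
      (Finset.mem_range.mpr k.succ_pos)
  obtain ⟨k, rfl | rfl⟩ := Nat.even_or_odd' n
  · linarith [bohr_odd hf hbd k, hP k]
  · have := bohr_even hf hbd k
    have h0 : 0 ≤ ‖a (k + 1)‖ ^ 2 / (1 + ‖a 0‖) := by positivity
    linarith [hP k]

/-- The Bohr sum without the area term. Carlson's inequalities reduce it to the partial sums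
`∑_{k ≤ n} ‖a k‖²`, which summation by parts turns back into `∑ ‖a n‖² r²ⁿ`. -/
theorem bohr_first_part {f : ℂ → ℂ} {a : ℕ → ℂ}
    (hf : ∀ z : ℂ, ‖z‖ < 1 → HasSum (fun n => a n * z ^ n) (f z))
    (hbd : ∀ z : ℂ, ‖z‖ < 1 → ‖f z‖ ≤ 1) {r : ℝ} (hr0 : 0 ≤ r) (hr : r < 1) :
    ∑' n : ℕ, ‖a n‖ * r ^ n +
      (1 / (1 + ‖a 0‖) + r / (1 - r)) * ∑' n : ℕ, ‖a (n + 1)‖ ^ 2 * r ^ (2 * (n + 1))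
      ≤ ‖a 0‖ + (1 - ‖a 0‖ ^ 2) * (r / (1 - r)) := by
  set R : ℕ → ℝ := fun n => 1 - ∑ k ∈ Finset.range (n + 1), ‖a k‖ ^ 2 with hR
  set Q := ∑' n : ℕ, ‖a (n + 1)‖ ^ 2 * r ^ (2 * (n + 1)) with hQ
  have hA : Summable fun n => ‖a n‖ * r ^ n := by
    have := (hf (r : ℂ) (by simpa [abs_of_nonneg hr0] using hr)).summable.norm
    simpa [abs_of_nonneg hr0] using this
  have hr2 : r ^ 2 < 1 := pow_lt_one₀ hr0 hr two_ne_zero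
  have hgeo : Summable fun n : ℕ => r ^ (2 * n) := by
    simpa only [pow_mul] using summable_geometric_of_lt_one (sq_nonneg r) hr2
  have hR0 : ∀ n, 0 ≤ R n := fun n => by
    have := bohr_odd hf hbd n
    simp only [hR]
    linarith [norm_nonneg (a (2 * n + 1))]
  have hR1 : ∀ n, R n ≤ 1 := fun n => by
    have : 0 ≤ ∑ k ∈ Finset.range (n + 1), ‖a k‖ ^ 2 := Finset.sum_nonneg fun _ _ => by positivity
    simp only [hR]; linarith
  have hRs : Summable fun n => R n * r ^ (2 * n) :=
    hgeo.of_nonneg_of_le (fun n => mul_nonneg (hR0 n) (by positivity))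
      fun n => mul_le_of_le_one_left (by positivity) (hR1 n)
  have hstep : ∀ n, R (n + 1) = R n - ‖a (n + 1)‖ ^ 2 := fun n => by
    simp only [hR]; rw [Finset.sum_range_succ _ (n + 1)]; ring
  have hR00 : R 0 = 1 - ‖a 0‖ ^ 2 := by simp [hR]
  have hQs : Summable fun n : ℕ => ‖a (n + 1)‖ ^ 2 * r ^ (2 * (n + 1)) := by
    have h1 := (hRs.mul_right (r ^ 2)).sub ((summable_nat_add_iff 1).mpr hRs)
    refine h1.congr fun n => ?_
    rw [hstep]; ring
  set X := ∑' n, R n * r ^ (2 * n) with hX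
  -- Summation by parts: the differences of `R` are `‖a (n + 1)‖ ^ 2`.
  have hXeq : (1 - r ^ 2) * X = 1 - ‖a 0‖ ^ 2 - Q := by
    have h1 : X = R 0 * r ^ (2 * 0) + ∑' n, R (n + 1) * r ^ (2 * (n + 1)) := hRs.tsum_eq_zero_add
    have h2 : ∑' n, R (n + 1) * r ^ (2 * (n + 1)) = X * r ^ 2 - Q := by
      rw [hX, hQ, ← tsum_mul_right, ← (hRs.mul_right (r ^ 2)).tsum_sub hQs]
      refine tsum_congr fun n => ?_
      rw [hstep]; ring
    rw [h2, hR00] at h1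
    simp only [mul_zero, pow_zero, mul_one] at h1
    linarith
  have ho : Summable fun k => ‖a (2 * k + 1)‖ * r ^ (2 * k + 1) :=
    hA.comp_injective (i := fun k => 2 * k + 1) fun x y h => by simpa using h
  have he : Summable fun k => ‖a (2 * k + 1 + 1)‖ * r ^ (2 * k + 1 + 1) :=
    hA.comp_injective (i := fun k => 2 * k + 1 + 1) fun x y h => by simpa using h
  have hsplit : ∑' n : ℕ, ‖a n‖ * r ^ n = ‖a 0‖ + (∑' k, ‖a (2 * k + 1)‖ * r ^ (2 * k + 1) +
      ∑' k, ‖a (2 * k + 1 + 1)‖ * r ^ (2 * k + 1 + 1)) := by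
    rw [hA.tsum_eq_zero_add, ← tsum_even_add_odd (f := fun n => ‖a (n + 1)‖ * r ^ (n + 1)) ho he]
    simp
  have ho2 : ∑' k, ‖a (2 * k + 1)‖ * r ^ (2 * k + 1) ≤ X * r := by
    rw [hX, ← tsum_mul_right]
    refine ho.tsum_le_tsum (fun k => ?_) (hRs.mul_right r)
    have h1 : ‖a (2 * k + 1)‖ ≤ R k := by simp only [hR]; linarith [bohr_odd hf hbd k]
    calc _ ≤ R k * r ^ (2 * k + 1) := by gcongr
      _ = _ := by ring
  have he2 : ∑' k, ‖a (2 * k + 1 + 1)‖ * r ^ (2 * k + 1 + 1)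
      ≤ X * r ^ 2 - Q * (1 / (1 + ‖a 0‖)) := by
    rw [hX, hQ, ← tsum_mul_right, ← tsum_mul_right,
      ← (hRs.mul_right (r ^ 2)).tsum_sub (hQs.mul_right _)]
    refine he.tsum_le_tsum (fun k => ?_) ((hRs.mul_right _).sub (hQs.mul_right _))
    have h1 : ‖a (2 * k + 1 + 1)‖ ≤ R k - ‖a (k + 1)‖ ^ 2 / (1 + ‖a 0‖) := by
      simp only [hR]; linarith [bohr_even hf hbd k]
    calc _ ≤ (R k - ‖a (k + 1)‖ ^ 2 / (1 + ‖a 0‖)) * r ^ (2 * k + 1 + 1) := by gcongr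
      _ = _ := by ring
  have hr1 : (1 - r) ≠ 0 := by linarith
  have hfin : X * r + X * r ^ 2 = (1 - ‖a 0‖ ^ 2 - Q) * (r / (1 - r)) := by
    rw [← hXeq]; field_simp; ring
  rw [hsplit]
  linarith

/-- A bound for `S / π` from `‖a n‖ ≤ 1 - ‖a 0‖²`; the constant is `9 / 64 = ∑ n / 9ⁿ`. -/
theorem bohr_area {f : ℂ → ℂ} {a : ℕ → ℂ}
    (hf : ∀ z : ℂ, ‖z‖ < 1 → HasSum (fun n => a n * z ^ n) (f z))
    (hbd : ∀ z : ℂ, ‖z‖ < 1 → ‖f z‖ ≤ 1) {r : ℝ} (hr0 : 0 ≤ r) (hr : r ≤ 1 / 3) :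
    ∑' n : ℕ, (n : ℝ) * ‖a n‖ ^ 2 * r ^ (2 * n) ≤ (1 - ‖a 0‖ ^ 2) ^ 2 * (9 / 64) := by
  have hs : HasSum (fun n : ℕ => (1 - ‖a 0‖ ^ 2) ^ 2 * ((n : ℝ) * (1 / 9 : ℝ) ^ n))
      ((1 - ‖a 0‖ ^ 2) ^ 2 * (9 / 64)) := by
    have := (hasSum_coe_mul_geometric_of_norm_lt_one (𝕜 := ℝ) (r := 1 / 9) (by norm_num)).mul_left
      ((1 - ‖a 0‖ ^ 2) ^ 2)
    norm_num at this ⊢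
    exact this
  have hle : ∀ n : ℕ, (n : ℝ) * ‖a n‖ ^ 2 * r ^ (2 * n) ≤
      (1 - ‖a 0‖ ^ 2) ^ 2 * ((n : ℝ) * (1 / 9 : ℝ) ^ n) := by
    intro n
    rcases n with _ | n
    · simp
    · have h1 := bohr_coeff_le hf hbd n
      have h2 : r ^ 2 ≤ 1 / 9 := by nlinarith
      calc _ ≤ ((n + 1 : ℕ) : ℝ) * (1 - ‖a 0‖ ^ 2) ^ 2 * (1 / 9) ^ (n + 1) := by
            rw [pow_mul]; gcongr
        _ = _ := by ring
  rw [← hs.tsum_eq]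
  exact (hs.summable.of_nonneg_of_le (fun n => by positivity) hle).tsum_le_tsum hle hs.summable


/-- Refined Bohr inequality with S_r/(π - S_r) term (λ = 0 case). -/
theorem refined_bohr_area_ratio (f : ℂ → ℂ) (a : ℕ → ℂ)
    (hf : ∀ z : ℂ, ‖z‖ < 1 → HasSum (fun n => a n * z ^ n) (f z))
    (hbd : ∀ z : ℂ, ‖z‖ < 1 → ‖f z‖ ≤ 1)
    (r : ℝ) (hr0 : 0 ≤ r) (hr : r ≤ 1 / 3)
    (S : ℝ) (hS : S = Real.pi * ∑' n : ℕ, (n : ℝ) * ‖a n‖ ^ 2 * r ^ (2 * n)) :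
    ∑' n : ℕ, ‖a n‖ * r ^ n +
      (1 / (1 + ‖a 0‖) + r / (1 - r)) * ∑' n : ℕ, ‖a (n + 1)‖ ^ 2 * r ^ (2 * (n + 1)) +
      (8 / 9) * (S / (Real.pi - S)) ≤ 1 := by
  -- Writing `s = S / π`, the area term is bounded by `(1 - α) ^ 2 / 2`, exactly the gap left by
  -- `bohr_first_part` at `r = 1 / 3`.
  have h1 := bohr_first_part hf hbd hr0 (by linarith)
  have h2 := bohr_area hf hbd hr0 hr
  set s := ∑' n : ℕ, (n : ℝ) * ‖a n‖ ^ 2 * r ^ (2 * n) with hs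
  set α := ‖a 0‖ with hα
  have hα0 : 0 ≤ α := norm_nonneg _
  have hα1 : α ^ 2 ≤ 1 := by linarith [bohr_coeff_le hf hbd 0, norm_nonneg (a (0 + 1))]
  have hα1' : α ≤ 1 := (sq_le_one_iff₀ hα0).mp hα1
  have hs1 : s ≤ 9 / 64 := by nlinarith
  have hratio : S / (Real.pi - S) = s / (1 - s) := by
    rw [hS, ← mul_one_sub, mul_div_mul_left _ _ Real.pi_ne_zero]
  have hr2 : r / (1 - r) ≤ 1 / 2 := by
    rw [div_le_div_iff₀ (by linarith) (by norm_num)]; linarith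
  have h3 : (1 - α ^ 2) * (r / (1 - r)) ≤ (1 - α ^ 2) * (1 / 2) :=
    mul_le_mul_of_nonneg_left hr2 (by linarith)
  have h4 : 8 / 9 * (s / (1 - s)) ≤ (1 - α) ^ 2 / 2 := by
    rw [← mul_div_assoc, div_le_iff₀ (by linarith)]
    -- The target with `s` replaced by its bound `9 (1 - α²)² / 64`, denominators cleared.
    have h5 : 0 ≤ (1 - α) ^ 2 * ((1 - α) * (16 * (3 + α) - 9 * (1 - α) * (1 + α) ^ 2)) := by
      refine mul_nonneg (sq_nonneg _) (mul_nonneg (by linarith) ?_)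
      nlinarith [mul_nonneg hα0 hα0, mul_nonneg (mul_nonneg hα0 hα0) hα0]
    nlinarith [mul_le_mul_of_nonneg_left h2 (by positivity : 0 ≤ 8 / 9 + (1 - α) ^ 2 / 2)]
  rw [hratio]
  linarith
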